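/- arXiv:1911.12432 — 2 statements merged into one kernel-verified Lean document; each statement's English description precedes it below -/
import Mathlib

section
/- Let x ∈ ℚ₊^E be a feasible solution of LP1, θ > 0, and suppose there is an order of the edges that is θ-flat with respect to x. Then there exist d-distance matchings M₁,…,M_q and rational coefficients λ₁,…,λ_q ≥ 0 such that Σ_{i=1}^q λᵢ·χ_{Mᵢ} = x and Σ_{i=1}^q λᵢ ≤ θ, where χ_{Mᵢ} ∈ {0,1}^E is the characteristic vector of Mᵢ. -/
open Finset

/-- `M` is a `d`-distance matching of the bipartite graph with left node set `Fin n`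
(ordered) and right node set `T`, whose edge set is `E`. -/
def DDM {n : ℕ} {T : Type*} [DecidableEq T] (d : ℕ) (E M : Finset (Fin n × T)) : Prop :=
  M ⊆ E ∧ (∀ e ∈ M, ∀ f ∈ M, e.1 = f.1 → e = f) ∧
    (∀ e ∈ M, ∀ f ∈ M, e.2 = f.2 → e ≠ f → d ≤ Nat.dist e.1.val f.1.val)

/-- `x` is a feasible solution of LP1. -/
def FeasLP1 {n : ℕ} {T : Type*} [DecidableEq T]
    (d : ℕ) (E : Finset (Fin n × T)) (x : Fin n × T → ℚ) : Prop :=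
  (∀ e, 0 ≤ x e) ∧ (∀ e ∉ E, x e = 0) ∧
  (∀ s : Fin n, ∑ e ∈ E.filter (fun e => e.1 = s), x e ≤ 1) ∧
  (∀ s : Fin n, ∀ t : T,
    ∑ e ∈ E.filter (fun e => e.2 = t ∧ s.val ≤ e.1.val ∧ e.1.val < s.val + d), x e ≤ 1)

/-- The list `l` of edges is a `θ`-flat order with respect to `x`. -/
def IsFlatOrder {n : ℕ} {T : Type*} [DecidableEq T]
    (d : ℕ) (θ : ℚ) (x : Fin n × T → ℚ) (l : List (Fin n × T)) : Prop :=
  ∀ i : Fin l.length,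
    (∑ j ∈ Finset.univ.filter
        (fun j : Fin l.length => i < j ∧ (l.get j).1 = (l.get i).1), x (l.get j)) +
    (∑ j ∈ Finset.univ.filter
        (fun j : Fin l.length => i < j ∧ (l.get j).2 = (l.get i).2 ∧
          Nat.dist (l.get j).1.val (l.get i).1.val < d), x (l.get j))
    ≤ θ - x (l.get i)

/-- conflict weight -/
def confW {n : ℕ} {T : Type*} [DecidableEq T] (d : ℕ) (a b : Fin n × T) : ℚ :=
  (if b.1 = a.1 then 1 else 0) + (if b.2 = a.2 ∧ Nat.dist b.1.val a.1.val < d then 1 else 0)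

lemma confW_nonneg {n : ℕ} {T : Type*} [DecidableEq T] (d : ℕ) (a b : Fin n × T) :
    0 ≤ confW d a b := by
  unfold confW; split_ifs <;> norm_num

lemma confW_cases {n : ℕ} {T : Type*} [DecidableEq T] (d : ℕ) (a b : Fin n × T) :
    1 ≤ confW d a b ∨ (b.1 ≠ a.1 ∧ (b.2 = a.2 → d ≤ Nat.dist b.1.val a.1.val)) := by
  by_cases h1 : b.1 = a.1
  · left; unfold confW; split_ifs <;> norm_num
  · by_cases h2 : b.2 = a.2 ∧ Nat.dist b.1.val a.1.val < d
    · left; unfold confW; rw [if_pos h2]; split_ifs; norm_num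
    · right
      refine ⟨h1, fun h => ?_⟩
      by_contra h3
      exact h2 ⟨h, by omega⟩

lemma flat_head {n : ℕ} {T : Type*} [DecidableEq T]
    (d : ℕ) (θ : ℚ) (x : Fin n × T → ℚ) (a : Fin n × T) (l : List (Fin n × T))
    (h : IsFlatOrder d θ x (a :: l)) :
    ∑ j : Fin l.length, confW d a (l.get j) * x (l.get j) ≤ θ - x a := by
  have := h ⟨0, by simp⟩
  simp only [Finset.sum_filter] at this
  erw [Fin.sum_univ_succ, Fin.sum_univ_succ] at this
  simp [confW, add_mul, Finset.sum_add_distrib] at this ⊢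
  exact this

lemma flat_tail {n : ℕ} {T : Type*} [DecidableEq T]
    (d : ℕ) (θ : ℚ) (x : Fin n × T → ℚ) (a : Fin n × T) (l : List (Fin n × T))
    (h : IsFlatOrder d θ x (a :: l)) : IsFlatOrder d θ x l := by
  intro i
  have := h i.succ
  simp only [Finset.sum_filter] at this ⊢
  erw [Fin.sum_univ_succ, Fin.sum_univ_succ] at this
  simpa using this

lemma main_aux {n : ℕ} {T : Type*} [DecidableEq T]
    (d : ℕ) (x : Fin n × T → ℚ) (hx : ∀ e, 0 ≤ x e) (θ : ℚ) (hθ : 0 < θ)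
    (l : List (Fin n × T)) (hnd : l.Nodup)
    (hflat : IsFlatOrder d θ x l) :
    ∃ (ι : Type) (_ : Fintype ι) (Ms : ι → Finset (Fin n × T)) (lam : ι → ℚ),
      (∀ i, DDM d l.toFinset (Ms i)) ∧ (∀ i, 0 ≤ lam i) ∧
      (∀ e ∈ l, ∑ i, lam i * (if e ∈ Ms i then 1 else 0) = x e) ∧
      ∑ i, lam i = θ := by
  classical
  induction l with
  | nil =>
    refine ⟨Unit, inferInstance, fun _ => ∅, fun _ => θ, ?_, fun _ => hθ.le, by simp, by simp⟩
    intro i; simp [DDM]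
  | cons a l ih =>
    obtain ⟨hal, hnd'⟩ := List.nodup_cons.mp hnd
    obtain ⟨ι, hι, Ms, lam, hM, hl, hs, ht⟩ := ih hnd' (flat_tail d θ x a l hflat)
    have hh := flat_head d θ x a l hflat
    let free : ι → Prop := fun i => ∀ b ∈ Ms i, ¬ 1 ≤ confW d a b
    set F : ℚ := ∑ i, (if free i then lam i else 0) with hF
    have hN : ∑ i, (if free i then 0 else lam i) ≤
        ∑ j : Fin l.length, confW d a (l.get j) * x (l.get j) := by
      have h1 : ∑ j : Fin l.length, confW d a (l.get j) * x (l.get j) =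
          ∑ i, ∑ j : Fin l.length,
            confW d a (l.get j) * (lam i * (if l.get j ∈ Ms i then 1 else 0)) := by
        rw [Finset.sum_comm]
        refine Finset.sum_congr rfl fun j _ => ?_
        rw [← Finset.mul_sum, hs _ (List.get_mem l j)]
      rw [h1]
      refine Finset.sum_le_sum fun i _ => ?_
      have hnn : ∀ j ∈ (Finset.univ : Finset (Fin l.length)), 0 ≤
          confW d a (l.get j) * (lam i * (if l.get j ∈ Ms i then (1:ℚ) else 0)) := by
        intro j _
        refine mul_nonneg (confW_nonneg _ _ _) (mul_nonneg (hl i) ?_)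
        split_ifs <;> norm_num
      split_ifs with hf
      · exact Finset.sum_nonneg hnn
      · simp only [free] at hf
        push Not at hf
        obtain ⟨b, hb, hb1⟩ := hf
        obtain ⟨j, rfl⟩ := List.mem_iff_get.mp (List.mem_toFinset.mp ((hM i).1 hb))
        refine le_trans ?_ (Finset.single_le_sum hnn (Finset.mem_univ j))
        rw [if_pos hb]
        nlinarith [hl i]
    have hsplit : F + ∑ i, (if free i then 0 else lam i) = θ := by
      rw [hF, ← Finset.sum_add_distrib, ← ht]
      refine Finset.sum_congr rfl fun i _ => ?_
      split_ifs <;> simp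
    have hxF : x a ≤ F := by linarith
    have hF0 : 0 ≤ F := (hx a).trans hxF
    obtain ⟨c, hc0, hc1, hcF⟩ : ∃ c : ℚ, 0 ≤ c ∧ c ≤ 1 ∧ c * F = x a := by
      rcases hF0.eq_or_lt with h | h
      · exact ⟨0, le_rfl, zero_le_one, by have := hx a; linarith⟩
      · exact ⟨x a / F, div_nonneg (hx a) hF0, (div_le_one h).2 hxF,
          div_mul_cancel₀ _ h.ne'⟩
    have haM : ∀ i, a ∉ Ms i := fun i hi => hal (List.mem_toFinset.mp ((hM i).1 hi))
    refine ⟨ι ⊕ ι, inferInstance,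
      Sum.elim Ms (fun i => if free i then insert a (Ms i) else ∅),
      Sum.elim (fun i => if free i then (1 - c) * lam i else lam i)
        (fun i => if free i then c * lam i else 0), ?_, ?_, ?_, ?_⟩
    · rintro (i | i)
      · refine ⟨fun e he => ?_, (hM i).2⟩
        have := (hM i).1 he
        simp at this ⊢; exact Or.inr this
      · simp only [Sum.elim_inr]
        split_ifs with hf
        · have hf' : ∀ b ∈ Ms i, b.1 ≠ a.1 ∧ (b.2 = a.2 → d ≤ Nat.dist b.1.val a.1.val) :=
            fun b hb => (confW_cases d a b).resolve_left (hf b hb)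
          refine ⟨?_, ?_, ?_⟩
          · intro e he
            rcases Finset.mem_insert.mp he with rfl | he
            · simp
            · have := (hM i).1 he
              simp at this ⊢; exact Or.inr this
          · intro e he f hf h
            rcases Finset.mem_insert.mp he with rfl | he2 <;>
            rcases Finset.mem_insert.mp hf with rfl | hf2
            · rfl
            · exact absurd h.symm (hf' f hf2).1
            · exact absurd h (hf' e he2).1
            · exact (hM i).2.1 e he2 f hf2 h
          · intro e he f hf h hne
            rcases Finset.mem_insert.mp he with rfl | he2 <;>
            rcases Finset.mem_insert.mp hf with rfl | hf2
            · exact absurd rfl hne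
            · rw [Nat.dist_comm]; exact (hf' f hf2).2 h.symm
            · exact (hf' e he2).2 h
            · exact (hM i).2.2 e he2 f hf2 h hne
        · simp [DDM]
    · rintro (i | i) <;> simp only [Sum.elim_inl, Sum.elim_inr] <;> split_ifs
      · exact mul_nonneg (by linarith) (hl i)
      · exact hl i
      · exact mul_nonneg hc0 (hl i)
      · exact le_rfl
    · intro e he
      rw [Fintype.sum_sum_type]
      simp only [Sum.elim_inl, Sum.elim_inr]
      by_cases hea : e = a
      · subst hea
        rw [← hcF, hF, Finset.mul_sum, ← Finset.sum_add_distrib]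
        refine Finset.sum_congr rfl fun i _ => ?_
        by_cases hf : free i <;> simp [hf, haM i]
      · have hel : e ∈ l := (List.mem_cons.mp he).resolve_left hea
        rw [← hs e hel, ← Finset.sum_add_distrib]
        refine Finset.sum_congr rfl fun i _ => ?_
        by_cases hf : free i <;> by_cases hm : e ∈ Ms i <;> simp [hf, hea, hm]
        ring
    · rw [Fintype.sum_sum_type, ← ht, ← Finset.sum_add_distrib]
      refine Finset.sum_congr rfl fun i _ => ?_
      simp only [Sum.elim_inl, Sum.elim_inr]
      split_ifs <;> ring

/-- If `x` is a rational feasible solution of LP1 admitting a `θ`-flat order of the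
edges, then `x` is a nonnegative combination `Σ λᵢ χ_{Mᵢ}` of characteristic vectors of
`d`-distance matchings with `Σ λᵢ ≤ θ`. -/
theorem stmt7 {n : ℕ} {T : Type*} [DecidableEq T]
    (d : ℕ) (hd : 1 ≤ d) (E : Finset (Fin n × T))
    (x : Fin n × T → ℚ) (hx : FeasLP1 d E x) (θ : ℚ) (hθ : 0 < θ)
    (l : List (Fin n × T)) (hnd : l.Nodup) (hlE : l.toFinset = E)
    (hflat : IsFlatOrder d θ x l) :
    ∃ (q : ℕ) (Ms : Fin q → Finset (Fin n × T)) (lam : Fin q → ℚ),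
      (∀ i, DDM d E (Ms i)) ∧ (∀ i, 0 ≤ lam i) ∧
      (∀ e, ∑ i, lam i * (if e ∈ Ms i then 1 else 0) = x e) ∧
      ∑ i, lam i ≤ θ := by
  obtain ⟨ι, hι, Ms, lam, hM, hl, hs, ht⟩ := main_aux d x hx.1 θ hθ l hnd hflat
  let φ := (Fintype.equivFin ι).symm
  refine ⟨Fintype.card ι, fun i => Ms (φ i), fun i => lam (φ i), fun i => hlE ▸ hM _,
    fun i => hl _, fun e => ?_, ?_⟩
  · rw [Equiv.sum_comp φ (fun i => lam i * (if e ∈ Ms i then (1:ℚ) else 0))]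
    by_cases he : e ∈ l
    · exact hs e he
    · have heE : e ∉ E := by rw [← hlE]; simpa using he
      rw [hx.2.1 e heE]
      refine Finset.sum_eq_zero fun i _ => ?_
      rw [if_neg (fun h => he (List.mem_toFinset.mp ((hM i).1 h))), mul_zero]
  · rw [Equiv.sum_comp φ lam, ht]
end

section
/- If d = |T|, then LP2 is integral: for every weight function w : E → ℝ, whenever LP2 is feasible it attains its optimum at an integral vector, so its optimum equals the maximum weight of a perfect d-distance matching. -/
open Finset

/-- `M` is a perfect `d`-distance matching of the bipartite graph with left node set
`Fin n` (ordered) and right node set `T`, whose edge set is `E`: every node of `S` is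
incident to exactly one edge of `M`, and edges at the same `T`-node are at distance at
least `d`. -/
def PerfectDDM {n : ℕ} {T : Type*} [DecidableEq T] (d : ℕ)
    (E M : Finset (Fin n × T)) : Prop :=
  M ⊆ E ∧ (∀ e ∈ M, ∀ f ∈ M, e.1 = f.1 → e = f) ∧
    (∀ e ∈ M, ∀ f ∈ M, e.2 = f.2 → e ≠ f → d ≤ Nat.dist e.1.val f.1.val) ∧
    (∀ i : Fin n, ∃ t, (i, t) ∈ M)

/-- `x` is a feasible solution of LP2. -/
def FeasLP2 {n : ℕ} {T : Type*} [DecidableEq T]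
    (d : ℕ) (E : Finset (Fin n × T)) (x : Fin n × T → ℝ) : Prop :=
  (∀ e, 0 ≤ x e) ∧ (∀ e ∉ E, x e = 0) ∧
  (∀ s : Fin n, ∑ e ∈ E.filter (fun e => e.1 = s), x e = 1) ∧
  (∀ s : Fin n, ∀ t : T,
    ∑ e ∈ E.filter (fun e => e.2 = t ∧ s.val ≤ e.1.val ∧ e.1.val < s.val + d), x e ≤ 1)

lemma feas_decomp {n : ℕ} {T : Type*} [DecidableEq T] [Fintype T]
    (d : ℕ) (hd : 1 ≤ d) (hdT : d = Fintype.card T) (E : Finset (Fin n × T))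
    (e : T ≃ Fin d) (x : Fin n × T → ℝ) (hx : FeasLP2 d E x) :
    ∃ a : Equiv.Perm (Fin d) → ℝ, (∀ σ, 0 ≤ a σ) ∧ ∑ σ, a σ = 1 ∧
      ∀ s t, x (s, t) = ∑ σ, a σ * (if σ ⟨s.val % d, Nat.mod_lt _ hd⟩ = e t then 1 else 0) := by
  obtain ⟨h0, hE, hrow, hcol⟩ := hx
  obtain ⟨X, hX⟩ : ∃ X : ℕ → T → ℝ, ∀ i t, X i t = if h : i < n then x (⟨i, h⟩, t) else 0 :=
    ⟨_, fun _ _ => rfl⟩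
  have X0 : ∀ i t, 0 ≤ X i t := by
    intro i t; rw [hX]; split_ifs
    · exact h0 _
    · exact le_rfl
  have Xbig : ∀ i t, n ≤ i → X i t = 0 := by
    intro i t h; rw [hX, dif_neg (by omega)]
  have Xrow : ∀ i, i < n → ∑ t, X i t = 1 := by
    intro i hi
    rw [← hrow ⟨i, hi⟩, Finset.sum_filter]
    rw [Finset.sum_subset (Finset.subset_univ E)
      (by intro p _ hp; rw [hE p hp]; simp), Fintype.sum_prod_type]
    rw [Finset.sum_eq_single (⟨i, hi⟩ : Fin n)]
    · simp [hX, hi]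
    · intro b _ hb; simp [hb]
    · simp
  have Xcol : ∀ s t, ∑ i ∈ range d, X (s + i) t ≤ 1 := by
    intro s t
    by_cases hs : s < n
    · refine le_trans (le_of_eq ?_) (hcol ⟨s, hs⟩ t)
      rw [Finset.sum_filter, Finset.sum_subset (Finset.subset_univ E)
        (by intro p _ hp; rw [hE p hp]; simp), Fintype.sum_prod_type]
      have : ∀ j : Fin n, (∑ y, if (j, y).2 = t ∧ s ≤ (j, y).1.val ∧ (j, y).1.val < s + d
          then x (j, y) else 0) = if s ≤ j.val ∧ j.val < s + d then X j.val t else 0 := by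
        intro j
        rw [Finset.sum_eq_single t]
        · simp [hX]
        · intro b _ hb; simp [hb]
        · simp
      rw [Finset.sum_congr rfl (fun j _ => this j),
        Fin.sum_univ_eq_sum_range (fun j => if s ≤ j ∧ j < s + d then X j t else 0) n]
      have h1 : ∑ i ∈ range d, X (s + i) t = ∑ j ∈ Finset.Ico s (s + d), X j t := by
        rw [Finset.sum_Ico_eq_sum_range]; simp
      rw [h1, ← Finset.sum_filter]
      symm
      apply Finset.sum_subset
      · intro j hj; simp at hj ⊢; omega
      · intro j hj hj'
        apply Xbig
        simp at hj hj'; by_contra hc; have := hj' (by omega) (by omega); omega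
    · rw [Finset.sum_eq_zero]
      · norm_num
      · intro i _; apply Xbig; omega
  have cardT : (Fintype.card T : ℝ) = d := by exact_mod_cast hdT.symm
  have Xfull : ∀ s, s + d ≤ n → ∀ t, ∑ i ∈ range d, X (s + i) t = 1 := by
    intro s hs
    have htot : ∑ t, ∑ i ∈ range d, X (s + i) t = ∑ t : T, (1 : ℝ) := by
      rw [Finset.sum_comm, Finset.sum_congr rfl
        (g := fun _ => (1 : ℝ)) (fun i hi => Xrow (s + i) (by simp at hi; omega))]
      simp [cardT]
    have := (Finset.sum_eq_sum_iff_of_le (fun t _ => Xcol s t)).1 htot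
    intro t; exact this t (mem_univ _)
  have Xper : ∀ s, s + d < n → ∀ t, X (s + d) t = X s t := by
    intro s hs t
    have h1 := Xfull s (by omega) t
    have h2 := Xfull (s + 1) (by omega) t
    have h3 := Finset.sum_range_succ (fun i => X (s + i) t) d
    have h4 := Finset.sum_range_succ' (fun i => X (s + i) t) d
    have h5 : ∑ i ∈ range d, X (s + (i + 1)) t = ∑ i ∈ range d, X (s + 1 + i) t :=
      Finset.sum_congr rfl (fun i _ => by rw [show s + (i + 1) = s + 1 + i by ring])
    simp only [add_zero] at h4
    linarith
  have Xmod : ∀ s, s < n → ∀ t, X s t = X (s % d) t := by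
    intro s
    induction s using Nat.strong_induction_on with
    | _ s ih =>
      intro hs t
      by_cases h : s < d
      · rw [Nat.mod_eq_of_lt h]
      · have h1 := Xper (s - d) (by omega) t
        rw [show s - d + d = s by omega] at h1
        rw [h1, ih (s - d) (by omega) (by omega) t, ← Nat.mod_eq_sub_mod (not_lt.1 h)]
  obtain ⟨C, hC⟩ : ∃ C : T → ℝ, ∀ t, C t = ∑ i ∈ range d, X i t := ⟨_, fun _ => rfl⟩
  have C1 : ∀ t, C t ≤ 1 := by
    intro t; have := Xcol 0 t; simp only [zero_add] at this; rw [hC]; exact this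
  let Y : Matrix (Fin d) (Fin d) ℝ := fun r c =>
    X r.val (e.symm c) + if r.val < n then 0 else (1 - C (e.symm c)) / ((d : ℝ) - n)
  have hY : Y ∈ doublyStochastic ℝ (Fin d) := by
    rw [mem_doublyStochastic_iff_sum]
    refine ⟨?_, ?_, ?_⟩
    · intro r c
      refine add_nonneg (X0 _ _) ?_
      split_ifs with h
      · exact le_rfl
      · apply div_nonneg
        · linarith [C1 (e.symm c)]
        · have : (n : ℝ) ≤ d := by exact_mod_cast (by have := r.2; omega : n ≤ d)
          linarith
    · intro r
      simp only [Y]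
      rw [Equiv.sum_comp e.symm (fun t => X r.val t +
        if r.val < n then 0 else (1 - C t) / ((d : ℝ) - n)), Finset.sum_add_distrib]
      by_cases h : r.val < n
      · simp [h, Xrow]
      · have hnd : n < d := by have := r.2; omega
        have hnd' : (n : ℝ) < d := by exact_mod_cast hnd
        have hCs : ∑ t, C t = n := by
          simp only [hC]
          rw [Finset.sum_comm, ← Finset.sum_subset (s₁ := range n)
            (by intro i; simp; omega)
            (by intro i _ hi; simp at hi; exact Finset.sum_eq_zero (fun t _ => Xbig i t hi))]
          rw [Finset.sum_congr rfl (g := fun _ => (1 : ℝ)) (fun i hi => Xrow i (by simpa using hi))]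
          simp
        simp only [h, if_false]
        rw [Finset.sum_eq_zero (fun t _ => Xbig _ t (by omega)), ← Finset.sum_div,
          Finset.sum_sub_distrib, hCs]
        simp only [sum_const, card_univ, nsmul_eq_mul, mul_one, cardT, zero_add]
        exact div_self (by linarith)
    · intro c
      simp only [Y]
      rw [Fin.sum_univ_eq_sum_range (fun r => X r (e.symm c) +
        if r < n then 0 else (1 - C (e.symm c)) / ((d : ℝ) - n)) d, Finset.sum_add_distrib, ← hC]
      by_cases h : d ≤ n
      · rw [Finset.sum_eq_zero (s := range d)
          (f := fun r => if r < n then (0:ℝ) else (1 - C (e.symm c)) / ((d : ℝ) - n))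
          (fun r hr => if_pos (by simp at hr; omega))]
        have := Xfull 0 (by omega) (e.symm c)
        simp only [zero_add] at this
        rw [hC, this, add_zero]
      · have hnd : n < d := by omega
        have hnd' : (n : ℝ) < d := by exact_mod_cast hnd
        rw [← Finset.sum_range_add_sum_Ico _ hnd.le,
          Finset.sum_eq_zero (fun r hr => if_pos (by simpa using hr)),
          Finset.sum_congr rfl (g := fun _ => (1 - C (e.symm c)) / ((d : ℝ) - n))
            (fun r hr => if_neg (by simp at hr; omega))]
        simp only [sum_const, Nat.card_Ico, nsmul_eq_mul, Nat.cast_sub hnd.le]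
        have : (d : ℝ) - n ≠ 0 := by linarith
        field_simp
        ring
  obtain ⟨a, ha0, ha1, haY⟩ := exists_eq_sum_perm_of_mem_doublyStochastic hY
  refine ⟨a, ha0, ha1, ?_⟩
  intro s t
  have hlt : s.val % d < n := lt_of_le_of_lt (Nat.mod_le _ _) s.2
  have h1 : x (s, t) = Y ⟨s.val % d, Nat.mod_lt _ hd⟩ (e t) := by
    have h2 := Xmod s.val s.2 t
    simp only [Y, Equiv.symm_apply_apply, if_pos hlt, add_zero]
    rw [← h2, hX, dif_pos s.2]
  rw [h1, ← haY, Matrix.sum_apply]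
  refine Finset.sum_congr rfl (fun σ _ => ?_)
  simp [Equiv.Perm.permMatrix, PEquiv.toMatrix_apply, eq_comm]

lemma feas_le {n : ℕ} {T : Type*} [DecidableEq T] [Fintype T]
    (d : ℕ) (hd : 1 ≤ d) (hdT : d = Fintype.card T) (E : Finset (Fin n × T))
    (w x : Fin n × T → ℝ) (hx : FeasLP2 d E x) :
    ∃ M, PerfectDDM d E M ∧ ∑ e ∈ E, w e * x e ≤ ∑ e ∈ M, w e := by
  have e : T ≃ Fin d := Fintype.equivFinOfCardEq hdT.symm
  obtain ⟨a, ha0, ha1, hax⟩ := feas_decomp d hd hdT E e x hx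
  have hE := hx.2.1
  let g : Equiv.Perm (Fin d) → Fin n → T := fun σ s =>
    e.symm (σ ⟨s.val % d, Nat.mod_lt _ hd⟩)
  have hobj : ∑ p ∈ E, w p * x p = ∑ σ, a σ * ∑ s, w (s, g σ s) := by
    rw [Finset.sum_subset (Finset.subset_univ E)
        (by intro p _ hp; rw [hE p hp]; simp), Fintype.sum_prod_type]
    simp only [hax, Finset.mul_sum]
    rw [Finset.sum_comm (s := (univ : Finset (Equiv.Perm (Fin d))))]
    refine Finset.sum_congr rfl (fun s _ => ?_)
    rw [Finset.sum_comm]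
    refine Finset.sum_congr rfl (fun σ _ => ?_)
    rw [Finset.sum_eq_single (g σ s)]
    · simp [g, mul_comm]
    · intro t _ ht
      rw [if_neg]
      · simp
      · intro h
        apply ht
        simp [g, h]
    · simp
  obtain ⟨σ, hσ, hle⟩ : ∃ σ, 0 < a σ ∧ ∑ p ∈ E, w p * x p ≤ ∑ s, w (s, g σ s) := by
    by_contra hcon
    push Not at hcon
    obtain ⟨σ₀, hσ₀⟩ : ∃ σ, 0 < a σ := by
      by_contra h
      push Not at h
      have : ∑ σ, a σ ≤ 0 := Finset.sum_nonpos (fun σ _ => h σ)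
      linarith
    have : ∑ σ, a σ * ∑ s, w (s, g σ s) < ∑ σ, a σ * ∑ p ∈ E, w p * x p := by
      apply Finset.sum_lt_sum
      · intro σ _
        rcases (ha0 σ).eq_or_lt with h | h
        · simp [← h]
        · exact mul_le_mul_of_nonneg_left (hcon σ h).le h.le
      · exact ⟨σ₀, mem_univ _, mul_lt_mul_of_pos_left (hcon σ₀ hσ₀) hσ₀⟩
    rw [← Finset.sum_mul, ha1, ← hobj] at this
    linarith
  refine ⟨univ.image (fun s => (s, g σ s)), ⟨?_, ?_, ?_, ?_⟩, ?_⟩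
  · intro p hp
    simp only [mem_image, mem_univ, true_and] at hp
    obtain ⟨s, rfl⟩ := hp
    by_contra hn
    have h1 := hE _ hn
    rw [hax] at h1
    have h2 := (Finset.sum_eq_zero_iff_of_nonneg (fun τ _ => by
      have := ha0 τ
      split_ifs <;> simp [this])).1 h1 σ (mem_univ _)
    simp [g] at h2
    linarith
  · intro p hp q hq h
    simp only [mem_image, mem_univ, true_and] at hp hq
    obtain ⟨s, rfl⟩ := hp
    obtain ⟨s', rfl⟩ := hq
    simp only at h
    rw [h]
  · intro p hp q hq h hne
    simp only [mem_image, mem_univ, true_and] at hp hq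
    obtain ⟨s, rfl⟩ := hp
    obtain ⟨s', rfl⟩ := hq
    simp only [g, EmbeddingLike.apply_eq_iff_eq, Fin.mk.injEq] at h
    have hss : s.val ≠ s'.val := by
      intro hh; apply hne; rw [Fin.ext hh]
    simp only [Nat.dist]
    rcases lt_or_gt_of_ne hss with hl | hl
    · have := Nat.le_of_dvd (by omega) ((Nat.modEq_iff_dvd' hl.le).1 h)
      omega
    · have := Nat.le_of_dvd (by omega) ((Nat.modEq_iff_dvd' hl.le).1 h.symm)
      omega
  · intro i
    exact ⟨g σ i, by simp⟩
  · rw [Finset.sum_image (by intro s _ s' _ h; exact (Prod.ext_iff.1 h).1)]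
    exact hle

/-- If `d = |T|`, then LP2 is integral: for every weight function, whenever LP2 is
feasible its optimum is attained at (the characteristic vector of) a perfect
`d`-distance matching. -/
theorem stmt9 {n : ℕ} {T : Type*} [DecidableEq T] [Fintype T]
    (d : ℕ) (hd : 1 ≤ d) (hdT : d = Fintype.card T) (E : Finset (Fin n × T)) :
    ∀ w : Fin n × T → ℝ, (∃ x, FeasLP2 d E x) →
      ∃ M, PerfectDDM d E M ∧
        ∀ x, FeasLP2 d E x → ∑ e ∈ E, w e * x e ≤ ∑ e ∈ M, w e := by
  classical
  rintro w ⟨x₀, hx₀⟩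
  obtain ⟨M₀, hM₀, -⟩ := feas_le d hd hdT E w x₀ hx₀
  obtain ⟨M, hM, hmax⟩ := Finset.exists_max_image
    (univ.filter (fun M : Finset (Fin n × T) => PerfectDDM d E M)) (fun M => ∑ e ∈ M, w e)
    ⟨M₀, by simpa using hM₀⟩
  refine ⟨M, by simpa using hM, fun x hx => ?_⟩
  obtain ⟨M', hM', hle⟩ := feas_le d hd hdT E w x hx
  exact hle.trans (hmax M' (by simpa using hM'))
end
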